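/- arXiv:2008.01155 — 6 statements merged into one kernel-verified Lean document; each statement's English description precedes it below -/
import Mathlib

section
/- (Pathwise version of Proposition A.3, forward direction.) Let B : [0,∞) → ℝ be continuous with B(0) = 0 and suppose the zero set {t ≥ 0 : B(t) = 0} has Lebesgue measure zero. Then Θ := σ₊⁻² P₊^B + σ₋⁻² P₋^B is continuous, strictly increasing, satisfies Θ(0) = 0 and Θ(t) → ∞ as t → ∞, hence has a continuous inverse Θ⁻¹ : [0,∞) → [0,∞); moreover the two-speed Brownian path Z := B ∘ Θ⁻¹ satisfies Z = B ∘ (σ₊² P₊^Z + σ₋² P₋^Z) and P₊^Z(θ) + P₋^Z(θ) = θ for every θ ≥ 0. -/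
open MeasureTheory Set Filter

/-- Occupation time of the positive half-line: `P₊^f(t) = ∫₀^t 1{f(s) > 0} ds`. -/
noncomputable def occPos (f : ℝ → ℝ) (t : ℝ) : ℝ :=
  ∫ s in (0:ℝ)..t, Set.indicator {u : ℝ | 0 < f u} (fun _ => (1:ℝ)) s

/-- Occupation time of the negative half-line: `P₋^f(t) = ∫₀^t 1{f(s) < 0} ds`. -/
noncomputable def occNeg (f : ℝ → ℝ) (t : ℝ) : ℝ :=
  ∫ s in (0:ℝ)..t, Set.indicator {u : ℝ | f u < 0} (fun _ => (1:ℝ)) s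

/-!
The clock `Θ` is the primitive of `s ↦ σ₊⁻² 1{B(s) > 0} + σ₋⁻² 1{B(s) < 0}`, which is bounded below
by a positive constant off the null zero set of `B`; hence `Θ` is a strictly increasing bijection.
Substituting `u = Θ(s)` shows that, up to time `Θ(t)`, the path `B ∘ Θ⁻¹` spends exactly
`σ₊⁻² P₊^B(t)` above zero and `σ₋⁻² P₋^B(t)` below. Weighting these occupation times by `σ₊²` and
`σ₋²` gives `P₊^B(t) + P₋^B(t) = t`, which is `Θ⁻¹` at time `Θ(t)`.
The substitution does not rely on differentiating `Θ`: the measure whose density is the rate of the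
clock is pushed forward by `Θ` to Lebesgue measure, as one sees on intervals.
-/

section Primitive

variable {g : ℝ → ℝ} {a : ℝ}

theorem mul_sub_le_integral_of_ae_le {u v c : ℝ} (huv : u ≤ v)
    (hg : IntervalIntegrable g volume u v) (hcg : ∀ᵐ s, c ≤ g s) :
    c * (v - u) ≤ ∫ s in u..v, g s := by
  simpa [mul_comm] using intervalIntegral.integral_mono_ae huv intervalIntegrable_const hg hcg

theorem exists_orderIso_eq_integral (hg : ∀ u v, IntervalIntegrable g volume u v)
    {c : ℝ} (hc : 0 < c) (hcg : ∀ᵐ s, c ≤ g s) (a : ℝ) :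
    ∃ e : ℝ ≃o ℝ, ∀ t, e t = ∫ s in a..t, g s := by
  set G : ℝ → ℝ := fun t ↦ ∫ s in a..t, g s
  have growth {u v : ℝ} (huv : u ≤ v) : c * (v - u) ≤ G v - G u := by
    rw [intervalIntegral.integral_interval_sub_left (hg a v) (hg a u)]
    exact mul_sub_le_integral_of_ae_le huv (hg u v) hcg
  have hG_mono : StrictMono G := fun u v huv ↦
    sub_pos.1 ((mul_pos hc (sub_pos.2 huv)).trans_le (growth huv.le))
  have hG_top : Tendsto G atTop atTop := by
    refine tendsto_atTop_mono' atTop ?_ <|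
      tendsto_atTop_add_const_left _ (G 0) (tendsto_id.const_mul_atTop hc)
    filter_upwards [eventually_ge_atTop 0] with t ht
    simpa [le_sub_iff_add_le'] using growth ht
  have hG_bot : Tendsto G atBot atBot := by
    refine tendsto_atBot_mono' atBot ?_ <|
      tendsto_atBot_add_const_left _ (G 0) (tendsto_id.const_mul_atBot hc)
    filter_upwards [eventually_le_atBot 0] with t ht
    have hle := growth ht
    simp only [id]
    linarith
  have hG_surj : Function.Surjective G :=
    (intervalIntegral.continuous_primitive hg a).surjective hG_top hG_bot
  exact ⟨hG_mono.orderIsoOfSurjective G hG_surj, fun _ ↦ rfl⟩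

theorem measurePreserving_withDensity_of_eq_integral
    (hg : ∀ u v, IntervalIntegrable g volume u v) (hg0 : ∀ᵐ s, 0 ≤ g s)
    {e : ℝ ≃o ℝ} (he : ∀ t, e t = ∫ s in a..t, g s) :
    MeasurePreserving e (volume.withDensity fun s ↦ ENNReal.ofReal (g s)) volume where
  measurable := e.continuous.measurable
  map_eq := by
    refine (Measure.ext_of_Ioc _ _ fun x y hxy ↦ ?_).symm
    have hle : e.symm x ≤ e.symm y := e.symm.monotone hxy.le
    have hmass : ∫ s in Ioc (e.symm x) (e.symm y), g s = y - x := by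
      rw [← intervalIntegral.integral_of_le hle,
        ← intervalIntegral.integral_interval_sub_left (hg a _) (hg a _), ← he, ← he,
        e.apply_symm_apply, e.apply_symm_apply]
    rw [Measure.map_apply e.continuous.measurable measurableSet_Ioc, e.preimage_Ioc,
      withDensity_apply _ measurableSet_Ioc,
      ← ofReal_integral_eq_lintegral_ofReal (hg _ _).1 (ae_restrict_of_ae hg0), hmass,
      Real.volume_Ioc]

theorem integral_eq_integral_smul_comp_of_eq_integral
    {E : Type*} [NormedAddCommGroup E] [NormedSpace ℝ E]
    (hg : ∀ u v, IntervalIntegrable g volume u v) (hg0 : ∀ᵐ s, 0 ≤ g s)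
    {e : ℝ ≃o ℝ} (he : ∀ t, e t = ∫ s in a..t, g s) (h : ℝ → E) (u v : ℝ) :
    ∫ x in e u..e v, h x = ∫ s in u..v, g s • h (e s) := by
  have subst_Ioc (u v : ℝ) :
      ∫ x in Ioc (e u) (e v), h x = ∫ s in Ioc u v, g s • h (e s) := by
    rw [← (measurePreserving_withDensity_of_eq_integral hg hg0 he).setIntegral_preimage_emb
        e.toHomeomorph.measurableEmbedding, e.preimage_Ioc, e.symm_apply_apply,
      e.symm_apply_apply, setIntegral_withDensity_eq_setIntegral_toReal_smul₀
        (hg u v).1.aemeasurable.ennreal_ofReal (ae_of_all _ fun _ ↦ ENNReal.ofReal_lt_top) _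
        measurableSet_Ioc]
    refine integral_congr_ae ?_
    filter_upwards [ae_restrict_of_ae hg0] with s hs
    rw [ENNReal.toReal_ofReal hs]
  rw [intervalIntegral, intervalIntegral, subst_Ioc, subst_Ioc]

end Primitive

section Occupation

variable {f f' : ℝ → ℝ} {t : ℝ}

theorem occNeg_eq_occPos_neg (f : ℝ → ℝ) : occNeg f = occPos (-f) := by
  funext t
  simp [occNeg, occPos]

theorem occPos_congr (ht : 0 ≤ t) (h : EqOn f f' (Ici 0)) : occPos f t = occPos f' t := by
  refine intervalIntegral.integral_congr fun s hs ↦ ?_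
  rw [uIcc_of_le ht] at hs
  simp only [indicator, mem_ofPred_eq, h hs.1]

theorem occNeg_congr (ht : 0 ≤ t) (h : EqOn f f' (Ici 0)) : occNeg f t = occNeg f' t := by
  rw [occNeg_eq_occPos_neg, occNeg_eq_occPos_neg]
  exact occPos_congr ht fun s hs ↦ congrArg Neg.neg (h hs)

theorem intervalIntegrable_indicator_one {S : Set ℝ} (hS : NullMeasurableSet S) (u v : ℝ) :
    IntervalIntegrable (S.indicator fun _ ↦ (1 : ℝ)) volume u v :=
  (intervalIntegrable_const (c := (1 : ℝ))).mono_fun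
    (aestronglyMeasurable_const.indicator₀ (hS.mono Measure.restrict_le_self))
    (ae_of_all _ fun _ ↦ norm_indicator_le_norm_self _ _)

theorem intervalIntegrable_indicator_pos (hf : AEMeasurable f) (u v : ℝ) :
    IntervalIntegrable ({s | 0 < f s}.indicator fun _ ↦ (1 : ℝ)) volume u v :=
  intervalIntegrable_indicator_one (hf.nullMeasurable measurableSet_Ioi) u v

theorem intervalIntegrable_indicator_neg (hf : AEMeasurable f) (u v : ℝ) :
    IntervalIntegrable ({s | f s < 0}.indicator fun _ ↦ (1 : ℝ)) volume u v :=
  intervalIntegrable_indicator_one (hf.nullMeasurable measurableSet_Iio) u v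

end Occupation

/-- The clock running at rate `a` while `f` is positive, at rate `b` while `f` is negative, and
standing still while `f` vanishes. The time change `Θ` is the clock of `B` with rates `σ₊⁻²` and
`σ₋⁻²`. -/
noncomputable def twoSpeedClock (a b : ℝ) (f : ℝ → ℝ) (t : ℝ) : ℝ :=
  a * occPos f t + b * occNeg f t

/-- The instantaneous rate `a·1{f > 0} + b·1{f < 0}` of `twoSpeedClock a b f`. -/
noncomputable def twoSpeedRate (a b : ℝ) (f : ℝ → ℝ) (s : ℝ) : ℝ :=
  a * {u | 0 < f u}.indicator (fun _ ↦ 1) s + b * {u | f u < 0}.indicator (fun _ ↦ 1) s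

section TwoSpeed

variable {a b : ℝ} {f : ℝ → ℝ}

theorem twoSpeedRate_of_pos {s : ℝ} (hs : 0 < f s) : twoSpeedRate a b f s = a := by
  simp [twoSpeedRate, hs, hs.le]

theorem twoSpeedRate_of_neg {s : ℝ} (hs : f s < 0) : twoSpeedRate a b f s = b := by
  simp [twoSpeedRate, hs, hs.le]

theorem twoSpeedRate_nonneg (ha : 0 ≤ a) (hb : 0 ≤ b) (f : ℝ → ℝ) (s : ℝ) :
    0 ≤ twoSpeedRate a b f s :=
  add_nonneg (mul_nonneg ha (indicator_nonneg (fun _ _ ↦ zero_le_one) s))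
    (mul_nonneg hb (indicator_nonneg (fun _ _ ↦ zero_le_one) s))

theorem min_le_twoSpeedRate {s : ℝ} (hs : f s ≠ 0) : min a b ≤ twoSpeedRate a b f s := by
  rcases hs.lt_or_gt with hneg | hpos
  · exact (min_le_right a b).trans_eq (twoSpeedRate_of_neg hneg).symm
  · exact (min_le_left a b).trans_eq (twoSpeedRate_of_pos hpos).symm

theorem intervalIntegrable_twoSpeedRate (hf : AEMeasurable f) (a b u v : ℝ) :
    IntervalIntegrable (twoSpeedRate a b f) volume u v :=
  ((intervalIntegrable_indicator_pos hf u v).const_mul a).add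
    ((intervalIntegrable_indicator_neg hf u v).const_mul b)

theorem twoSpeedClock_eq_integral (hf : AEMeasurable f) (a b t : ℝ) :
    twoSpeedClock a b f t = ∫ s in 0..t, twoSpeedRate a b f s := by
  simp only [twoSpeedClock, twoSpeedRate, occPos, occNeg]
  rw [intervalIntegral.integral_add ((intervalIntegrable_indicator_pos hf 0 t).const_mul a)
      ((intervalIntegrable_indicator_neg hf 0 t).const_mul b),
    intervalIntegral.integral_const_mul, intervalIntegral.integral_const_mul]

theorem occPos_add_occNeg (hf : AEMeasurable f) (hf0 : ∀ᵐ s, f s ≠ 0) (t : ℝ) :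
    occPos f t + occNeg f t = t := by
  have hrate : ∀ᵐ s, twoSpeedRate 1 1 f s = 1 := hf0.mono fun s hs ↦
    hs.lt_or_gt.elim twoSpeedRate_of_neg twoSpeedRate_of_pos
  calc occPos f t + occNeg f t = twoSpeedClock 1 1 f t := by simp [twoSpeedClock]
    _ = ∫ s in 0..t, twoSpeedRate 1 1 f s := twoSpeedClock_eq_integral hf 1 1 t
    _ = ∫ _ in 0..t, (1 : ℝ) :=
      intervalIntegral.integral_congr_ae (hrate.mono fun _ hs _ ↦ hs)
    _ = t := by simp

theorem exists_orderIso_eq_twoSpeedClock (ha : 0 < a) (hb : 0 < b) (hf : AEMeasurable f)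
    (hf0 : ∀ᵐ s, f s ≠ 0) : ∃ e : ℝ ≃o ℝ, ∀ t, e t = twoSpeedClock a b f t := by
  simp only [twoSpeedClock_eq_integral hf]
  exact exists_orderIso_eq_integral (intervalIntegrable_twoSpeedRate hf a b) (lt_min ha hb)
    (hf0.mono fun _ ↦ min_le_twoSpeedRate) 0

theorem twoSpeedClock_zero (a b : ℝ) (f : ℝ → ℝ) : twoSpeedClock a b f 0 = 0 := by
  simp [twoSpeedClock, occPos, occNeg]

theorem occPos_comp_symm_twoSpeedClock (ha : 0 ≤ a) (hb : 0 ≤ b) (hf : AEMeasurable f)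
    {e : ℝ ≃o ℝ} (he : ∀ t, e t = twoSpeedClock a b f t) (t : ℝ) :
    occPos (f ∘ e.symm) (e t) = a * occPos f t := by
  have he0 : e 0 = 0 := (he 0).trans (twoSpeedClock_zero a b _)
  have hrate (s : ℝ) :
      twoSpeedRate a b f s • {u | 0 < (f ∘ e.symm) u}.indicator (fun _ ↦ (1 : ℝ)) (e s) =
        a * {u | 0 < f u}.indicator (fun _ ↦ 1) s := by
    by_cases hs : 0 < f s
    · simp [twoSpeedRate_of_pos, hs]
    · simp [hs]
  calc occPos (f ∘ e.symm) (e t)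
    _ = ∫ x in e 0..e t, {u | 0 < (f ∘ e.symm) u}.indicator (fun _ ↦ (1 : ℝ)) x := by
      rw [he0, occPos]
    _ = ∫ s in 0..t, a * {u | 0 < f u}.indicator (fun _ ↦ 1) s := by
      rw [integral_eq_integral_smul_comp_of_eq_integral (intervalIntegrable_twoSpeedRate hf a b)
        (ae_of_all _ (twoSpeedRate_nonneg ha hb f))
        fun t ↦ (he t).trans (twoSpeedClock_eq_integral hf a b t)]
      simp only [hrate]
    _ = a * occPos f t := intervalIntegral.integral_const_mul _ _

theorem twoSpeedClock_neg (a b : ℝ) (f : ℝ → ℝ) :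
    twoSpeedClock a b (-f) = twoSpeedClock b a f := by
  funext t
  simp only [twoSpeedClock, occNeg_eq_occPos_neg, neg_neg, add_comm]

theorem occNeg_comp_symm_twoSpeedClock (ha : 0 ≤ a) (hb : 0 ≤ b) (hf : AEMeasurable f)
    {e : ℝ ≃o ℝ} (he : ∀ t, e t = twoSpeedClock a b f t) (t : ℝ) :
    occNeg (f ∘ e.symm) (e t) = b * occNeg f t := by
  rw [← twoSpeedClock_neg] at he
  rw [occNeg_eq_occPos_neg, occNeg_eq_occPos_neg]
  exact occPos_comp_symm_twoSpeedClock hb ha hf.neg he t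

end TwoSpeed

theorem exists_aemeasurable_ae_ne_zero_eqOn {α : Type*} [MeasurableSpace α] {μ : Measure α}
    {f : α → ℝ} {S : Set α} (hS : MeasurableSet S) (hf : AEMeasurable f (μ.restrict S))
    (hf0 : ∀ᵐ s ∂μ, s ∈ S → f s ≠ 0) :
    ∃ F : α → ℝ, AEMeasurable F μ ∧ (∀ᵐ s ∂μ, F s ≠ 0) ∧ EqOn F f S := by
  classical
  refine ⟨S.piecewise f 1, ?_, ?_, S.piecewise_eqOn f 1⟩
  · exact (hf.aestronglyMeasurable.piecewise hS aestronglyMeasurable_one).aemeasurable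
  · filter_upwards [hf0] with s hs
    by_cases hsS : s ∈ S
    · simpa [hsS] using hs hsS
    · simp [hsS]

theorem exists_orderIso_eqOn_twoSpeedClock {a b : ℝ} {f : ℝ → ℝ} (ha : 0 < a) (hb : 0 < b)
    (hf : AEMeasurable f (volume.restrict (Ici 0))) (hf0 : ∀ᵐ s, s ∈ Ici 0 → f s ≠ 0) :
    ∃ e : ℝ ≃o ℝ, e 0 = 0 ∧ ∀ t, 0 ≤ t →
      twoSpeedClock a b f t = e t ∧ occPos f t + occNeg f t = t ∧
      occPos (f ∘ e.symm) (e t) = a * occPos f t ∧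
      occNeg (f ∘ e.symm) (e t) = b * occNeg f t := by
  -- Continued without zeros to all of `ℝ`, the path has a clock that is a bijection of `ℝ`.
  obtain ⟨F, hF, hF0, hFf⟩ := exists_aemeasurable_ae_ne_zero_eqOn measurableSet_Ici hf hf0
  obtain ⟨e, he⟩ := exists_orderIso_eq_twoSpeedClock ha hb hF hF0
  have he0 : e 0 = 0 := (he 0).trans (twoSpeedClock_zero a b _)
  have hcomp : EqOn (F ∘ e.symm) (f ∘ e.symm) (Ici 0) := fun θ hθ ↦
    hFf (e.le_symm_apply.2 (he0.trans_le hθ))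
  refine ⟨e, he0, fun t ht ↦ ?_⟩
  have het : 0 ≤ e t := he0.symm.trans_le (e.monotone ht)
  rw [← occPos_congr het hcomp, ← occNeg_congr het hcomp, twoSpeedClock,
    ← occPos_congr ht hFf, ← occNeg_congr ht hFf]
  exact ⟨(he t).symm, occPos_add_occNeg hF hF0 t,
    occPos_comp_symm_twoSpeedClock ha.le hb.le hF he t,
    occNeg_comp_symm_twoSpeedClock ha.le hb.le hF he t⟩

theorem two_speed_brownian_path_forward_general
    (σp σm : ℝ) (hσp : 0 < σp) (hσm : 0 < σm)
    (B : ℝ → ℝ) (hB : AEMeasurable B (volume.restrict (Ici 0)))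
    (hzero : volume {t : ℝ | 0 ≤ t ∧ B t = 0} = 0) :
    ∃ Θ Tinv : ℝ → ℝ,
      (∀ t : ℝ, Θ t = (σp ^ 2)⁻¹ * occPos B t + (σm ^ 2)⁻¹ * occNeg B t) ∧
      ContinuousOn Θ (Ici 0) ∧
      StrictMonoOn Θ (Ici 0) ∧
      Θ 0 = 0 ∧
      Tendsto Θ atTop atTop ∧
      ContinuousOn Tinv (Ici 0) ∧
      MapsTo Tinv (Ici 0) (Ici 0) ∧
      (∀ t ∈ Ici (0:ℝ), Tinv (Θ t) = t) ∧
      (∀ θ ∈ Ici (0:ℝ), Θ (Tinv θ) = θ) ∧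
      (∀ θ ∈ Ici (0:ℝ),
        (B ∘ Tinv) θ =
          B (σp ^ 2 * occPos (B ∘ Tinv) θ + σm ^ 2 * occNeg (B ∘ Tinv) θ) ∧
        occPos (B ∘ Tinv) θ + occNeg (B ∘ Tinv) θ = θ) := by
  obtain ⟨e, he0, he⟩ := exists_orderIso_eqOn_twoSpeedClock (a := (σp ^ 2)⁻¹) (b := (σm ^ 2)⁻¹)
    (by positivity) (by positivity) hB (by simpa [ae_iff] using hzero)
  set Θ := twoSpeedClock (σp ^ 2)⁻¹ (σm ^ 2)⁻¹ B
  have hΘ : EqOn Θ e (Ici 0) := fun t ht ↦ (he t ht).1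
  have hsymm : MapsTo e.symm (Ici 0) (Ici 0) := fun θ hθ ↦ e.le_symm_apply.2 (he0.trans_le hθ)
  refine ⟨Θ, e.symm, fun _ ↦ rfl, e.continuous.continuousOn.congr hΘ,
    (e.strictMono.strictMonoOn _).congr hΘ.symm, (hΘ self_mem_Ici).trans he0,
    e.tendsto_atTop.congr' ((eventually_ge_atTop 0).mono fun _ ht ↦ (hΘ ht).symm),
    e.symm.continuous.continuousOn, hsymm,
    fun t ht ↦ by rw [hΘ ht, e.symm_apply_apply],
    fun θ hθ ↦ by rw [hΘ (hsymm hθ), e.apply_symm_apply], fun θ hθ ↦ ?_⟩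
  obtain ⟨hclock, htotal, hpos, hneg⟩ := he (e.symm θ) (hsymm hθ)
  rw [e.apply_symm_apply] at hclock hpos hneg
  rw [hpos, hneg, mul_inv_cancel_left₀ (by positivity), mul_inv_cancel_left₀ (by positivity),
    htotal]
  exact ⟨rfl, hclock⟩

/-- Pathwise version of Proposition A.3, forward direction: from a continuous path `B`
vanishing at `0` whose zero set is Lebesgue-null, the time change
`Θ = σ₊⁻² P₊^B + σ₋⁻² P₋^B` is continuous, strictly increasing, vanishes at `0` and tends
to `∞`; it has a continuous inverse `Tinv` on `[0,∞)`, and the two-speed path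
`Z = B ∘ Tinv` satisfies `Z = B ∘ (σ₊² P₊^Z + σ₋² P₋^Z)` and `P₊^Z(θ) + P₋^Z(θ) = θ`. -/
theorem two_speed_brownian_path_forward
    (σp σm : ℝ) (hσp : 0 < σp) (hσm : 0 < σm)
    (B : ℝ → ℝ) (hB : ContinuousOn B (Set.Ici 0)) (hB0 : B 0 = 0)
    (hzero : MeasureTheory.volume {t : ℝ | 0 ≤ t ∧ B t = 0} = 0) :
    ∃ Θ Tinv : ℝ → ℝ,
      (∀ t : ℝ, Θ t = (σp ^ 2)⁻¹ * occPos B t + (σm ^ 2)⁻¹ * occNeg B t) ∧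
      ContinuousOn Θ (Set.Ici 0) ∧
      StrictMonoOn Θ (Set.Ici 0) ∧
      Θ 0 = 0 ∧
      Filter.Tendsto Θ Filter.atTop Filter.atTop ∧
      ContinuousOn Tinv (Set.Ici 0) ∧
      Set.MapsTo Tinv (Set.Ici 0) (Set.Ici 0) ∧
      (∀ t ∈ Set.Ici (0:ℝ), Tinv (Θ t) = t) ∧
      (∀ θ ∈ Set.Ici (0:ℝ), Θ (Tinv θ) = θ) ∧
      (∀ θ ∈ Set.Ici (0:ℝ),
        (B ∘ Tinv) θ =
          B (σp ^ 2 * occPos (B ∘ Tinv) θ + σm ^ 2 * occNeg (B ∘ Tinv) θ) ∧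
        occPos (B ∘ Tinv) θ + occNeg (B ∘ Tinv) θ = θ) := by
  exact two_speed_brownian_path_forward_general σp σm hσp hσm B
    (hB.aemeasurable measurableSet_Ici) hzero
end

section
/- (Lemma on the pathwise maps Φ±.) For every (z₊, z₋) ∈ 𝒟 and every θ ≥ 0, the sets {ν ∈ [0,θ] : λ₊(ν) = λ₋(θ−ν)} and {ν ∈ [0,θ] : λ₋(ν) = λ₊(θ−ν)} are nonempty and the maximum defining p₊(θ) and the minimum defining p₋(θ) are attained. Moreover, the functions p₊ and p₋ are continuous and nondecreasing, p₊(0) = p₋(0) = 0, λ₊ ∘ p₊ = λ₋ ∘ p₋ identically, and p₊(θ) + p₋(θ) = θ for all θ ≥ 0. -/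
open Set Filter

/-- The Skorohod map: `Γ(z)(θ) = max(0, sup_{0 ≤ ν ≤ θ} (−z(ν)))`. -/
noncomputable def skorohod (z : ℝ → ℝ) (θ : ℝ) : ℝ :=
  max 0 (sSup ((fun ν => -z ν) '' Set.Icc 0 θ))

/-!
For fixed `θ`, moving `ν` from `0` to `θ` makes `λ₊(ν)` increase from the common initial value of
`λ₊` and `λ₋`, while `λ₋(θ - ν)` decreases to it, so the two cross on a compact set; this gives
the maximum `p₊(θ)` and the minimum `p₋(θ)`. The reflection `ν ↦ θ - ν` exchanges the roles of
`λ₊` and `λ₋`, whence `p₊(θ) + p₋(θ) = θ`. Enlarging `θ` raises `λ₋(θ - ν)` at each `ν`, which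
pushes the crossings to the right, so both maps are nondecreasing; as their sum is continuous,
neither can jump.
-/

section RunningSupremum

variable {α : Type*} {a : ℝ} {f : ℝ → α}

theorem monotoneOn_sSup_image_Icc [ConditionallyCompleteLattice α]
    (hf : ∀ θ, BddAbove (f '' Icc a θ)) :
    MonotoneOn (fun θ => sSup (f '' Icc a θ)) (Ici a) := fun _ hs t _ hst =>
  csSup_le_csSup (hf t) ((nonempty_Icc.2 hs).image f) (image_mono (Icc_subset_Icc_right hst))

theorem continuousOn_sSup_image_Icc [ConditionallyCompleteLinearOrder α] [TopologicalSpace α]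
    [OrderTopology α] (hf : ContinuousOn f (Ici a)) :
    ContinuousOn (fun θ => sSup (f '' Icc a θ)) (Ici a) := by
  -- Parametrizing `[a, θ]` by `[0, 1]` makes the supremum one over a fixed compact set.
  have extension_continuous : Continuous (fun x => f (max a x)) :=
    hf.comp_continuous (by fun_prop) (le_max_left a)
  have sup_continuous :
      Continuous fun θ => sSup ((fun t => f (max a (AffineMap.lineMap a θ t))) '' Icc (0 : ℝ) 1) :=
    isCompact_Icc.continuous_sSup (f := fun θ t => f (max a (AffineMap.lineMap a θ t)))
      (extension_continuous.comp (g := fun x => f (max a x)) (by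
        simp only [AffineMap.lineMap_apply_ring']
        fun_prop))
  refine sup_continuous.continuousOn.congr fun θ hθ => congrArg sSup ?_
  rw [image_congr fun x (hx : x ∈ Icc a θ) => congrArg f (max_eq_right hx.1).symm,
    ← segment_eq_Icc hθ, segment_eq_image_lineMap, image_image]

end RunningSupremum

theorem monotoneOn_skorohod {z : ℝ → ℝ} (hz : ContinuousOn z (Ici 0)) :
    MonotoneOn (skorohod z) (Ici 0) :=
  monotoneOn_const.sup <| monotoneOn_sSup_image_Icc fun _ =>
    isCompact_Icc.bddAbove_image (hz.neg.mono Icc_subset_Ici_self)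

theorem continuousOn_skorohod {z : ℝ → ℝ} (hz : ContinuousOn z (Ici 0)) :
    ContinuousOn (skorohod z) (Ici 0) :=
  continuousOn_const.sup (continuousOn_sSup_image_Icc hz.neg)

theorem skorohod_zero (z : ℝ → ℝ) : skorohod z 0 = max 0 (-z 0) := by
  simp [skorohod]

theorem continuousOn_of_monotoneOn_of_continuousOn_add {β : Type*} [LinearOrder β]
    [TopologicalSpace β] {p q : β → ℝ} {s : Set β} (hp : MonotoneOn p s) (hq : MonotoneOn q s)
    (hpq : ContinuousOn (p + q) s) : ContinuousOn p s := by
  have dist_le {x y : β} (hx : x ∈ s) (hy : y ∈ s) :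
      dist (p x) (p y) ≤ dist ((p + q) x) ((p + q) y) := by
    wlog hxy : x ≤ y generalizing x y
    · simpa only [dist_comm] using this hy hx (le_of_not_ge hxy)
    have hpxy := hp hx hy hxy
    have hqxy := hq hx hy hxy
    simp only [Real.dist_eq, Pi.add_apply]
    rw [abs_of_nonpos (by linarith), abs_of_nonpos (by linarith)]
    linarith
  intro x hx
  exact tendsto_iff_dist_tendsto_zero.2 <| squeeze_zero' (.of_forall fun _ => dist_nonneg)
    (eventually_mem_nhdsWithin.mono fun _ hy => dist_le hy hx)
    (tendsto_iff_dist_tendsto_zero.1 (hpq x hx))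

section Crossings

variable {α : Type*} {f g : ℝ → α} {θ : ℝ}

/-- The times `ν ∈ [0, θ]` at which `f` meets the time-reversal of `g` about `θ`. -/
def crossingSet (f g : ℝ → α) (θ : ℝ) : Set ℝ :=
  {ν ∈ Icc 0 θ | f ν = g (θ - ν)}

/-- The last crossing time; the map `p₊` is `lastCrossing λ₊ λ₋`. It is `0` when there is no
crossing. -/
noncomputable def lastCrossing (f g : ℝ → α) (θ : ℝ) : ℝ :=
  sSup (crossingSet f g θ)

/-- The first crossing time; the map `p₋` is `firstCrossing λ₋ λ₊`. It is `0` when there is no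
crossing. -/
noncomputable def firstCrossing (f g : ℝ → α) (θ : ℝ) : ℝ :=
  sInf (crossingSet f g θ)

theorem sub_mem_crossingSet {ν : ℝ} (hν : ν ∈ crossingSet f g θ) :
    θ - ν ∈ crossingSet g f θ :=
  ⟨⟨sub_nonneg.2 hν.1.2, sub_le_self θ hν.1.1⟩, by rw [sub_sub_cancel]; exact hν.2.symm⟩

theorem isLeast_crossingSet_sub {p : ℝ} (hp : IsGreatest (crossingSet f g θ) p) :
    IsLeast (crossingSet g f θ) (θ - p) :=
  ⟨sub_mem_crossingSet hp.1, fun _ hν => sub_le_comm.1 (hp.2 (sub_mem_crossingSet hν))⟩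

theorem continuousOn_comp_sub_Icc [TopologicalSpace α] (hg : ContinuousOn g (Ici 0)) :
    ContinuousOn (fun ν => g (θ - ν)) (Icc 0 θ) :=
  hg.comp (by fun_prop) fun _ hν => sub_nonneg.2 hν.2

theorem isCompact_crossingSet [TopologicalSpace α] [T2Space α] (hf : ContinuousOn f (Ici 0))
    (hg : ContinuousOn g (Ici 0)) : IsCompact (crossingSet f g θ) :=
  isCompact_Icc.of_isClosed_subset
    (((hf.mono Icc_subset_Ici_self).prodMk
      (continuousOn_comp_sub_Icc hg)).preimage_isClosed_of_isClosed isClosed_Icc isClosed_diagonal)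
    (sep_subset _ _)

variable [LinearOrder α] [TopologicalSpace α] [OrderClosedTopology α]

theorem exists_mem_crossingSet_mem_Icc (hf : ContinuousOn f (Ici 0)) (hg : ContinuousOn g (Ici 0))
    {a b : ℝ} (ha : 0 ≤ a) (hab : a ≤ b) (hb : b ≤ θ)
    (hfa : f a ≤ g (θ - a)) (hgb : g (θ - b) ≤ f b) : ∃ ν ∈ crossingSet f g θ, ν ∈ Icc a b := by
  have Icc_subset : Icc a b ⊆ Icc 0 θ := Icc_subset_Icc ha hb
  obtain ⟨ν, hν, heq⟩ := isPreconnected_Icc.intermediate_value₂ (left_mem_Icc.2 hab)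
    (right_mem_Icc.2 hab) (hf.mono (Icc_subset.trans Icc_subset_Ici_self))
    ((continuousOn_comp_sub_Icc hg).mono Icc_subset) hfa hgb
  exact ⟨ν, ⟨Icc_subset hν, heq⟩, hν⟩

theorem exists_mem_crossingSet_ge (hf : ContinuousOn f (Ici 0)) (hg : ContinuousOn g (Ici 0))
    (hfm : MonotoneOn f (Ici 0)) (h0 : g 0 ≤ f 0) {a : ℝ} (ha : a ∈ Icc 0 θ)
    (hfa : f a ≤ g (θ - a)) : ∃ ν ∈ crossingSet f g θ, a ≤ ν := by
  have crossed_at_right : g (θ - θ) ≤ f θ := by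
    rw [sub_self]
    exact h0.trans (hfm self_mem_Ici (ha.1.trans ha.2) (ha.1.trans ha.2))
  obtain ⟨ν, hν, haν, -⟩ :=
    exists_mem_crossingSet_mem_Icc hf hg ha.1 ha.2 le_rfl hfa crossed_at_right
  exact ⟨ν, hν, haν⟩

theorem exists_mem_crossingSet_le (hf : ContinuousOn f (Ici 0)) (hg : ContinuousOn g (Ici 0))
    (hgm : MonotoneOn g (Ici 0)) (h0 : f 0 ≤ g 0) {b : ℝ} (hb : b ∈ Icc 0 θ)
    (hgb : g (θ - b) ≤ f b) : ∃ ν ∈ crossingSet f g θ, ν ≤ b := by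
  have not_crossed_at_left : f 0 ≤ g (θ - 0) := by
    rw [sub_zero]
    exact h0.trans (hgm self_mem_Ici (hb.1.trans hb.2) (hb.1.trans hb.2))
  obtain ⟨ν, hν, -, hνb⟩ :=
    exists_mem_crossingSet_mem_Icc hf hg le_rfl hb.1 hb.2 not_crossed_at_left hgb
  exact ⟨ν, hν, hνb⟩

theorem crossingSet_nonempty (hf : ContinuousOn f (Ici 0)) (hg : ContinuousOn g (Ici 0))
    (hfm : MonotoneOn f (Ici 0)) (hgm : MonotoneOn g (Ici 0)) (h0 : f 0 = g 0) (hθ : 0 ≤ θ) :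
    (crossingSet f g θ).Nonempty := by
  have not_crossed_at_left : f 0 ≤ g (θ - 0) := by
    rw [sub_zero, h0]
    exact hgm self_mem_Ici hθ hθ
  obtain ⟨ν, hν, -⟩ :=
    exists_mem_crossingSet_ge hf hg hfm h0.ge (left_mem_Icc.2 hθ) not_crossed_at_left
  exact ⟨ν, hν⟩

theorem isGreatest_lastCrossing (hf : ContinuousOn f (Ici 0)) (hg : ContinuousOn g (Ici 0))
    (hfm : MonotoneOn f (Ici 0)) (hgm : MonotoneOn g (Ici 0)) (h0 : f 0 = g 0) (hθ : 0 ≤ θ) :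
    IsGreatest (crossingSet f g θ) (lastCrossing f g θ) :=
  (isCompact_crossingSet hf hg).isGreatest_sSup (crossingSet_nonempty hf hg hfm hgm h0 hθ)

theorem isLeast_firstCrossing (hf : ContinuousOn f (Ici 0)) (hg : ContinuousOn g (Ici 0))
    (hfm : MonotoneOn f (Ici 0)) (hgm : MonotoneOn g (Ici 0)) (h0 : f 0 = g 0) (hθ : 0 ≤ θ) :
    IsLeast (crossingSet f g θ) (firstCrossing f g θ) :=
  (isCompact_crossingSet hf hg).isLeast_sInf (crossingSet_nonempty hf hg hfm hgm h0 hθ)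

theorem firstCrossing_eq_sub_lastCrossing (hf : ContinuousOn f (Ici 0))
    (hg : ContinuousOn g (Ici 0)) (hfm : MonotoneOn f (Ici 0)) (hgm : MonotoneOn g (Ici 0))
    (h0 : f 0 = g 0) (hθ : 0 ≤ θ) : firstCrossing g f θ = θ - lastCrossing f g θ :=
  (isLeast_crossingSet_sub (isGreatest_lastCrossing hf hg hfm hgm h0 hθ)).csInf_eq

theorem monotoneOn_lastCrossing (hf : ContinuousOn f (Ici 0)) (hg : ContinuousOn g (Ici 0))
    (hfm : MonotoneOn f (Ici 0)) (hgm : MonotoneOn g (Ici 0)) (h0 : f 0 = g 0) :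
    MonotoneOn (lastCrossing f g) (Ici 0) := by
  intro s hs t ht hst
  set p := lastCrossing f g s
  obtain ⟨⟨hp, hfp⟩, -⟩ := isGreatest_lastCrossing hf hg hfm hgm h0 hs
  have not_crossed_at_p : f p ≤ g (t - p) :=
    hfp.trans_le (hgm (sub_nonneg.2 hp.2) (sub_nonneg.2 (hp.2.trans hst)) (by gcongr))
  obtain ⟨ν, hν, hpν⟩ :=
    exists_mem_crossingSet_ge hf hg hfm h0.ge ⟨hp.1, hp.2.trans hst⟩ not_crossed_at_p
  exact hpν.trans ((isGreatest_lastCrossing hf hg hfm hgm h0 ht).2 hν)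

theorem monotoneOn_firstCrossing (hf : ContinuousOn f (Ici 0)) (hg : ContinuousOn g (Ici 0))
    (hfm : MonotoneOn f (Ici 0)) (hgm : MonotoneOn g (Ici 0)) (h0 : f 0 = g 0) :
    MonotoneOn (firstCrossing f g) (Ici 0) := by
  intro s hs t ht hst
  set q := firstCrossing f g t
  have hleast_s := isLeast_firstCrossing hf hg hfm hgm h0 hs
  obtain ⟨⟨hq, hfq⟩, -⟩ := isLeast_firstCrossing hf hg hfm hgm h0 ht
  rcases le_total s q with hsq | hqs
  · exact hleast_s.1.1.2.trans hsq
  · have crossed_at_q : g (s - q) ≤ f q :=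
      (hgm (sub_nonneg.2 hqs) (sub_nonneg.2 hq.2) (by gcongr)).trans_eq hfq.symm
    obtain ⟨ν, hν, hνq⟩ := exists_mem_crossingSet_le hf hg hgm h0.le ⟨hq.1, hqs⟩ crossed_at_q
    exact (hleast_s.2 hν).trans hνq

end Crossings

theorem pathwise_maps_props_general {α : Type*} [LinearOrder α] [TopologicalSpace α]
    [OrderClosedTopology α] {f g : ℝ → α}
    (hf : ContinuousOn f (Ici 0)) (hg : ContinuousOn g (Ici 0))
    (hfm : MonotoneOn f (Ici 0)) (hgm : MonotoneOn g (Ici 0)) (h0 : f 0 = g 0) :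
    ∃ pp pm : ℝ → ℝ,
      (∀ θ ∈ Ici (0 : ℝ), IsGreatest {ν ∈ Icc 0 θ | f ν = g (θ - ν)} (pp θ)) ∧
      (∀ θ ∈ Ici (0 : ℝ), IsLeast {ν ∈ Icc 0 θ | g ν = f (θ - ν)} (pm θ)) ∧
      ContinuousOn pp (Ici 0) ∧ ContinuousOn pm (Ici 0) ∧
      MonotoneOn pp (Ici 0) ∧ MonotoneOn pm (Ici 0) ∧
      pp 0 = 0 ∧ pm 0 = 0 ∧
      (∀ θ ∈ Ici (0 : ℝ), f (pp θ) = g (pm θ)) ∧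
      (∀ θ ∈ Ici (0 : ℝ), pp θ + pm θ = θ) := by
  have greatest (θ : ℝ) (hθ : θ ∈ Ici 0) := isGreatest_lastCrossing hf hg hfm hgm h0 hθ
  have least (θ : ℝ) (hθ : θ ∈ Ici 0) := isLeast_firstCrossing hg hf hgm hfm h0.symm hθ
  have pm_eq (θ : ℝ) (hθ : θ ∈ Ici 0) := firstCrossing_eq_sub_lastCrossing hf hg hfm hgm h0 hθ
  have pp_mono := monotoneOn_lastCrossing hf hg hfm hgm h0
  have pm_mono := monotoneOn_firstCrossing hg hf hgm hfm h0.symm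
  have sum_eq (θ : ℝ) (hθ : θ ∈ Ici 0) : lastCrossing f g θ + firstCrossing g f θ = θ := by
    rw [pm_eq θ hθ, add_sub_cancel]
  have sum_continuous : ContinuousOn (lastCrossing f g + firstCrossing g f) (Ici 0) :=
    continuousOn_id.congr sum_eq
  refine ⟨lastCrossing f g, firstCrossing g f, greatest, least,
    continuousOn_of_monotoneOn_of_continuousOn_add pp_mono pm_mono sum_continuous,
    continuousOn_of_monotoneOn_of_continuousOn_add pm_mono pp_mono
      (add_comm (lastCrossing f g) _ ▸ sum_continuous),
    pp_mono, pm_mono, ?_, ?_, fun θ hθ => ?_, sum_eq⟩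
  · exact le_antisymm (greatest 0 self_mem_Ici).1.1.2 (greatest 0 self_mem_Ici).1.1.1
  · exact le_antisymm (least 0 self_mem_Ici).1.1.2 (least 0 self_mem_Ici).1.1.1
  · rw [pm_eq θ hθ]
    exact (greatest θ hθ).1.2

/-- Lemma on the pathwise maps `Φ±`: for `(z₊, z₋) ∈ 𝒟` the maxima/minima defining
`p₊(θ)` and `p₋(θ)` are attained (in particular the corresponding sets are nonempty),
and the resulting functions `p₊, p₋` are continuous, nondecreasing, vanish at `0`,
satisfy `λ₊ ∘ p₊ = λ₋ ∘ p₋` and `p₊(θ) + p₋(θ) = θ` for all `θ ≥ 0`. -/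
theorem pathwise_maps_props
    (zp zm : ℝ → ℝ)
    (hzp : ContinuousOn zp (Set.Ici 0)) (hzm : ContinuousOn zm (Set.Ici 0))
    (hzp0 : zp 0 = 0) (hzm0 : zm 0 = 0)
    (hzpinf : Filter.liminf (fun θ => (zp θ : EReal)) Filter.atTop = ⊥)
    (hzminf : Filter.liminf (fun θ => (zm θ : EReal)) Filter.atTop = ⊥) :
    ∃ pp pm : ℝ → ℝ,
      (∀ θ ∈ Set.Ici (0:ℝ),
        IsGreatest {ν ∈ Set.Icc 0 θ | skorohod zp ν = skorohod zm (θ - ν)} (pp θ)) ∧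
      (∀ θ ∈ Set.Ici (0:ℝ),
        IsLeast {ν ∈ Set.Icc 0 θ | skorohod zm ν = skorohod zp (θ - ν)} (pm θ)) ∧
      ContinuousOn pp (Set.Ici 0) ∧ ContinuousOn pm (Set.Ici 0) ∧
      MonotoneOn pp (Set.Ici 0) ∧ MonotoneOn pm (Set.Ici 0) ∧
      pp 0 = 0 ∧ pm 0 = 0 ∧
      (∀ θ ∈ Set.Ici (0:ℝ), skorohod zp (pp θ) = skorohod zm (pm θ)) ∧
      (∀ θ ∈ Set.Ici (0:ℝ), pp θ + pm θ = θ) :=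
  pathwise_maps_props_general (continuousOn_skorohod hzp) (continuousOn_skorohod hzm)
    (monotoneOn_skorohod hzp) (monotoneOn_skorohod hzm) (by simp only [skorohod_zero, hzp0, hzm0])
end

section
/- (Complementarity identity, equation (2.35).) For every (z₊, z₋) ∈ 𝒟 and every θ ≥ 0, the two nonnegative quantities (z₊ + λ₊)(p₊(θ)) and (z₋ + λ₋)(p₋(θ)) satisfy (z₊ + λ₊)(p₊(θ)) · (z₋ + λ₋)(p₋(θ)) = 0; that is, at each time at least one of them vanishes. -/
open Set Filter

/-!
Since `λ₊ ν = λ₋ (θ - ν)` is the condition defining `p₋ θ` read at `θ - ν`, one has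
`p₊ θ + p₋ θ = θ`. Where `z + Γ(z)` is positive, the running supremum `Γ(z)` is locally constant.
If both factors were positive, the equation `λ₊ ν = λ₋ (θ - ν)` would therefore hold for all `ν`
in `[0, θ]` near `p₊ θ`; as `p₊ θ` is the largest solution, `p₊ θ = θ` and `p₋ θ = 0`.
But `z₋ + λ₋` vanishes at time `0`.
-/

open scoped Topology

section Skorohod

variable {z : ℝ → ℝ} {b c x y T : ℝ}

lemma skorohod_nonneg (z : ℝ → ℝ) (x : ℝ) : 0 ≤ skorohod z x := le_max_left _ _

lemma add_skorohod_zero (hz : z 0 ≤ 0) : z 0 + skorohod z 0 = 0 := by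
  simp [skorohod, hz]

lemma skorohod_le (hc : 0 ≤ c) (h : ∀ y ∈ Icc 0 x, -z y ≤ c) : skorohod z x ≤ c :=
  max_le hc (Real.sSup_le (forall_mem_image.2 h) hc)

lemma neg_le_skorohod (hz : LowerSemicontinuousOn z (Icc 0 x)) (hy : y ∈ Icc 0 x) :
    -z y ≤ skorohod z x := by
  obtain ⟨m, hm⟩ := hz.bddBelow_of_isCompact isCompact_Icc
  have hbdd : BddAbove ((fun ν => -z ν) '' Icc 0 x) :=
    ⟨-m, forall_mem_image.2 fun ν hν => neg_le_neg (hm (mem_image_of_mem z hν))⟩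
  exact le_max_of_le_right (le_csSup hbdd (mem_image_of_mem _ hy))

lemma add_skorohod_nonneg (hz : LowerSemicontinuousOn z (Icc 0 x)) (hx : 0 ≤ x) :
    0 ≤ z x + skorohod z x :=
  neg_le_iff_add_nonneg'.1 (neg_le_skorohod hz (right_mem_Icc.2 hx))

lemma skorohod_le_max (hz : LowerSemicontinuousOn z (Icc 0 b))
    (h : ∀ y ∈ Icc b x, -z y ≤ c) : skorohod z x ≤ max (skorohod z b) c := by
  refine skorohod_le (le_max_of_le_left (skorohod_nonneg z b)) fun y hy => ?_
  rcases le_total y b with hyb | hby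
  · exact le_max_of_le_left (neg_le_skorohod hz ⟨hy.1, hyb⟩)
  · exact le_max_of_le_right (h y ⟨hby, hy.2⟩)

lemma eventually_skorohod_eq (hz : LowerSemicontinuousOn z (Icc 0 T)) (hb : b ∈ Icc 0 T)
    (hpos : 0 < z b + skorohod z b) :
    ∀ᶠ x in 𝓝[Icc 0 T] b, skorohod z x = skorohod z b := by
  obtain ⟨c, hbc, hc⟩ : ∃ c, -z b < c ∧ c < skorohod z b :=
    exists_between (neg_lt_iff_pos_add'.2 hpos)
  have hnear : ∀ᶠ y in 𝓝[Icc 0 T] b, -c < z y := hz b hb (-c) (neg_lt.1 hbc)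
  have hbetween : ∀ᶠ x in 𝓝[Icc 0 T] b, ∀ y ∈ uIcc b x, -c < z y :=
    ((tendsto_const_nhdsWithin hb).uIcc tendsto_id).eventually hnear.smallSets
  filter_upwards [hbetween, self_mem_nhdsWithin] with x hbx hx
  have hx_le : skorohod z x ≤ max (skorohod z b) c :=
    skorohod_le_max (hz.mono (Icc_subset_Icc_right hb.2)) fun y hy =>
      (neg_lt.1 (hbx y (Icc_subset_uIcc hy))).le
  have hb_le : skorohod z b ≤ max (skorohod z x) c :=
    skorohod_le_max (hz.mono (Icc_subset_Icc_right hx.2)) fun y hy =>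
      (neg_lt.1 (hbx y (Icc_subset_uIcc' hy))).le
  exact le_antisymm (by rwa [max_eq_left hc.le] at hx_le)
    ((le_max_iff.1 hb_le).resolve_right hc.not_ge)

end Skorohod

section Reflection

variable {G : Type*} [AddCommGroup G] [PartialOrder G] [IsOrderedAddMonoid G]

lemma mapsTo_sub_Icc_zero (θ : G) : MapsTo (θ - ·) (Icc 0 θ) (Icc 0 θ) :=
  fun _ hν => ⟨sub_nonneg.2 hν.2, sub_le_self θ hν.1⟩

lemma isLeast_sub_of_isGreatest {α : Type*} {f g : G → α} {θ a : G}
    (ha : IsGreatest {ν ∈ Icc 0 θ | f ν = g (θ - ν)} a) :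
    IsLeast {ν ∈ Icc 0 θ | g ν = f (θ - ν)} (θ - a) := by
  refine ⟨⟨mapsTo_sub_Icc_zero θ ha.1.1, by rw [sub_sub_cancel, ha.1.2]⟩, fun ν hν => ?_⟩
  exact sub_le_comm.1 (ha.2 ⟨mapsTo_sub_Icc_zero θ hν.1, by rw [sub_sub_cancel, hν.2]⟩)

end Reflection

lemma eq_right_of_eventually_le {α : Type*} [LinearOrder α] [TopologicalSpace α]
    [OrderTopology α] [DenselyOrdered α] {l a r : α} (ha : a ∈ Icc l r)
    (h : ∀ᶠ x in 𝓝[Icc l r] a, x ≤ a) : a = r := by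
  by_contra hne
  have har : a < r := lt_of_le_of_ne ha.2 hne
  have hle : 𝓝[>] a ≤ 𝓝[Icc l r] a := by
    rw [← nhdsWithin_Ioo_eq_nhdsGT har]
    exact nhdsWithin_mono a (Ioo_subset_Icc_self.trans (Icc_subset_Icc_left ha.1))
  have : (𝓝[>] a).NeBot := nhdsGT_neBot_of_exists_gt ⟨r, har⟩
  obtain ⟨x, hxa, hax⟩ := ((h.filter_mono hle).and self_mem_nhdsWithin).exists
  exact hxa.not_gt hax

lemma eq_of_isGreatest_of_add_skorohod_pos {z w : ℝ → ℝ} {θ a : ℝ}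
    (hz : LowerSemicontinuousOn z (Icc 0 θ)) (hw : LowerSemicontinuousOn w (Icc 0 θ))
    (ha : IsGreatest {ν ∈ Icc 0 θ | skorohod z ν = skorohod w (θ - ν)} a)
    (hza : 0 < z a + skorohod z a) (hwa : 0 < w (θ - a) + skorohod w (θ - a)) : a = θ := by
  have hreflect : Tendsto (θ - ·) (𝓝[Icc 0 θ] a) (𝓝[Icc 0 θ] (θ - a)) :=
    (continuous_const.sub continuous_id).continuousWithinAt.tendsto_nhdsWithin
      (mapsTo_sub_Icc_zero θ)
  refine eq_right_of_eventually_le ha.1.1 ?_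
  filter_upwards [self_mem_nhdsWithin, eventually_skorohod_eq hz ha.1.1 hza,
    hreflect.eventually (eventually_skorohod_eq hw (mapsTo_sub_Icc_zero θ ha.1.1) hwa)]
    with ν hν hzν hwν
  exact ha.2 ⟨hν, by rw [hzν, hwν, ha.1.2]⟩

theorem complementarity_identity_general {zp zm : ℝ → ℝ} {θ a b : ℝ}
    (hzp : LowerSemicontinuousOn zp (Icc 0 θ)) (hzm : LowerSemicontinuousOn zm (Icc 0 θ))
    (hzm0 : zm 0 ≤ 0)
    (ha : IsGreatest {ν ∈ Icc 0 θ | skorohod zp ν = skorohod zm (θ - ν)} a)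
    (hb : IsLeast {ν ∈ Icc 0 θ | skorohod zm ν = skorohod zp (θ - ν)} b) :
    0 ≤ zp a + skorohod zp a ∧ 0 ≤ zm b + skorohod zm b ∧
      (zp a + skorohod zp a) * (zm b + skorohod zm b) = 0 := by
  obtain rfl : b = θ - a := hb.unique (isLeast_sub_of_isGreatest ha)
  have haθ : a ∈ Icc 0 θ := ha.1.1
  have hbθ : θ - a ∈ Icc 0 θ := hb.1.1
  have hp := add_skorohod_nonneg (hzp.mono (Icc_subset_Icc_right haθ.2)) haθ.1
  have hm := add_skorohod_nonneg (hzm.mono (Icc_subset_Icc_right hbθ.2)) hbθ.1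
  refine ⟨hp, hm, ?_⟩
  by_contra hne
  obtain ⟨hp_ne, hm_ne⟩ := mul_ne_zero_iff.1 hne
  obtain rfl : a = θ := eq_of_isGreatest_of_add_skorohod_pos hzp hzm ha
    (hp.lt_of_ne' hp_ne) (hm.lt_of_ne' hm_ne)
  exact hm_ne (by rw [sub_self, add_skorohod_zero hzm0])

/-- Complementarity identity (equation (2.35)): for `(z₊, z₋) ∈ 𝒟` and `θ ≥ 0`, the two
nonnegative quantities `(z₊ + λ₊)(p₊(θ))` and `(z₋ + λ₋)(p₋(θ))` have product zero,
i.e. at each time at least one of them vanishes. -/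
theorem complementarity_identity
    (zp zm : ℝ → ℝ)
    (hzp : ContinuousOn zp (Set.Ici 0)) (hzm : ContinuousOn zm (Set.Ici 0))
    (hzp0 : zp 0 = 0) (hzm0 : zm 0 = 0)
    (hzpinf : Filter.liminf (fun θ => (zp θ : EReal)) Filter.atTop = ⊥)
    (hzminf : Filter.liminf (fun θ => (zm θ : EReal)) Filter.atTop = ⊥)
    (pp pm : ℝ → ℝ)
    (hpp : ∀ θ ∈ Set.Ici (0:ℝ),
      IsGreatest {ν ∈ Set.Icc 0 θ | skorohod zp ν = skorohod zm (θ - ν)} (pp θ))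
    (hpm : ∀ θ ∈ Set.Ici (0:ℝ),
      IsLeast {ν ∈ Set.Icc 0 θ | skorohod zm ν = skorohod zp (θ - ν)} (pm θ)) :
    ∀ θ ∈ Set.Ici (0:ℝ),
      0 ≤ zp (pp θ) + skorohod zp (pp θ) ∧
      0 ≤ zm (pm θ) + skorohod zm (pm θ) ∧
      (zp (pp θ) + skorohod zp (pp θ)) * (zm (pm θ) + skorohod zm (pm θ)) = 0 := fun θ hθ =>
  complementarity_identity_general (hzp.mono Icc_subset_Ici_self).lowerSemicontinuousOn
    (hzm.mono Icc_subset_Ici_self).lowerSemicontinuousOn hzm0.le (hpp θ hθ) (hpm θ hθ)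
end

section
/- (Appendix C, equation (7.62).) For every α ∈ ℝ, the complex-valued integral ∫₀^∞ (1 − e^{iαℓ}) (2πℓ³)^{−1/2} dℓ converges (the integrand is Lebesgue integrable on (0,∞)) and equals √|α| (1 − sign(α) i), where sign(α) equals 1 for α > 0, −1 for α < 0, and 0 for α = 0. -/
open MeasureTheory Set Real

/-!
Write `F(z) = ∫₀^∞ (1 - e^{-zt}) t^{s-1} dt` with `-1 < Re s < 0`. The substitution `t ↦ rt` shows
that `F` is homogeneous of degree `-s`, so Euler's identity `z F'(z) = -s F(z)` forces
`F(z) = F(1) z^{-s}` on the open right half-plane. At `z = 1` the same identity reads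
`Γ(s + 1) = -s F(1)`, because `F'(1) = ∫₀^∞ e^{-t} t^s dt`; thus `F(1) = -Γ(s)`. The formula extends
by continuity to the imaginary axis, where `s = -1/2` and `z = -iα` give the claim.
-/

section StableExponent

open Filter Topology

/-- The exponent `z ↦ ∫₀^∞ (1 - e^{-zt}) t^{s-1} dt` attached to the stable Lévy measure
`t^{s-1} dt`, encoded as a Mellin transform. A stable law of index `a` corresponds to `s = -a`. -/
noncomputable def stableExponent (s z : ℂ) : ℂ :=
  mellin (fun t : ℝ => 1 - Complex.exp (-(z * t))) s

variable {s z : ℂ}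

lemma norm_one_sub_cexp_neg_le_norm (hz : 0 ≤ z.re) : ‖1 - Complex.exp (-z)‖ ≤ ‖z‖ := by
  have hderiv (w : ℂ) : HasDerivAt (fun w : ℂ => Complex.exp (-w)) (-Complex.exp (-w)) w := by
    simpa using (hasDerivAt_neg w).cexp
  have hbound (w : ℂ) (hw : w ∈ {w : ℂ | 0 ≤ w.re}) : ‖-Complex.exp (-w)‖ ≤ 1 := by
    simpa [Complex.norm_exp] using hw
  simpa using (convex_halfSpace_re_ge 0).norm_image_sub_le_of_norm_hasDerivWithin_le
    (fun w _ => (hderiv w).hasDerivWithinAt) hbound hz (y := 0) (by simp)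

lemma norm_one_sub_cexp_neg_le_two (hz : 0 ≤ z.re) : ‖1 - Complex.exp (-z)‖ ≤ 2 := by
  have hexp : ‖Complex.exp (-z)‖ ≤ 1 := by simpa [Complex.norm_exp] using hz
  calc ‖1 - Complex.exp (-z)‖ ≤ ‖(1 : ℂ)‖ + ‖Complex.exp (-z)‖ := norm_sub_le _ _
    _ ≤ 2 := by rw [norm_one]; linarith

lemma integrableOn_rpow_mul_min {σ C D : ℝ} (hσ : -1 < σ) (hσ' : σ < 0) (hC : 0 ≤ C)
    (hD : 0 ≤ D) : IntegrableOn (fun t : ℝ => t ^ (σ - 1) * min (C * t) D) (Ioi 0) := by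
  have hcont : Continuous fun t : ℝ => min (C * t) D := by fun_prop
  have hnorm {t : ℝ} (ht : 0 ≤ t) : ‖min (C * t) D‖ = min (C * t) D :=
    Real.norm_of_nonneg (le_min (mul_nonneg hC ht) hD)
  have htop : (fun t : ℝ => min (C * t) D) =O[atTop] (· ^ (-0 : ℝ)) := by
    refine Asymptotics.IsBigO.of_bound D ?_
    filter_upwards [eventually_ge_atTop 0] with t ht
    simp [hnorm ht]
  have hzero : (fun t : ℝ => min (C * t) D) =O[𝓝[>] 0] (· ^ (-(-1) : ℝ)) := by
    refine Asymptotics.IsBigO.of_bound C ?_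
    filter_upwards [self_mem_nhdsWithin] with t ht
    simp [hnorm (le_of_lt ht), abs_of_pos (mem_Ioi.mp ht)]
  exact mellin_convergent_of_isBigO_scalar (hcont.locallyIntegrable.locallyIntegrableOn _)
    htop hσ' hzero hσ

lemma norm_cpow_smul_one_sub_cexp_le {C t : ℝ} (hz : 0 ≤ z.re) (hC : ‖z‖ ≤ C) (ht : 0 < t) :
    ‖(t : ℂ) ^ (s - 1) • (1 - Complex.exp (-(z * t)))‖ ≤ t ^ (s.re - 1) * min (C * t) 2 := by
  have hre : 0 ≤ (z * t).re := by simpa using mul_nonneg hz ht.le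
  have hlin : ‖1 - Complex.exp (-(z * t))‖ ≤ C * t :=
    calc ‖1 - Complex.exp (-(z * t))‖ ≤ ‖z * t‖ := norm_one_sub_cexp_neg_le_norm hre
      _ = ‖z‖ * t := by rw [norm_mul, Complex.norm_of_nonneg ht.le]
      _ ≤ C * t := by gcongr
  rw [norm_smul, Complex.norm_cpow_eq_rpow_re_of_pos ht, Complex.sub_re, Complex.one_re]
  gcongr
  exact le_min hlin (norm_one_sub_cexp_neg_le_two hre)

lemma aestronglyMeasurable_cpow_smul_one_sub_cexp {μ : Measure ℝ} (s z : ℂ) :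
    AEStronglyMeasurable (fun t : ℝ => (t : ℂ) ^ (s - 1) • (1 - Complex.exp (-(z * t)))) μ :=
  (by fun_prop : Measurable _).aestronglyMeasurable

lemma mellinConvergent_one_sub_cexp (hs : -1 < s.re) (hs' : s.re < 0) (hz : 0 ≤ z.re) :
    MellinConvergent (fun t : ℝ => 1 - Complex.exp (-(z * t))) s := by
  refine (integrableOn_rpow_mul_min hs hs' (norm_nonneg z) zero_le_two).mono'
    (aestronglyMeasurable_cpow_smul_one_sub_cexp s z) ?_
  filter_upwards [ae_restrict_mem measurableSet_Ioi] with t ht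
  exact norm_cpow_smul_one_sub_cexp_le hz le_rfl ht

lemma continuousOn_stableExponent (hs : -1 < s.re) (hs' : s.re < 0) :
    ContinuousOn (stableExponent s) {z | 0 ≤ z.re} := by
  intro z _
  refine continuousWithinAt_of_dominated
    (bound := fun t => t ^ (s.re - 1) * min ((‖z‖ + 1) * t) 2)
    (.of_forall fun w => aestronglyMeasurable_cpow_smul_one_sub_cexp s w) ?_
    (integrableOn_rpow_mul_min hs hs' (by positivity) zero_le_two)
    (.of_forall fun t => by fun_prop)
  have hnorm : ∀ᶠ w in 𝓝[{z | 0 ≤ z.re}] z, ‖w‖ < ‖z‖ + 1 :=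
    nhdsWithin_le_nhds (continuous_norm.continuousAt.eventually_lt_const (lt_add_one _))
  filter_upwards [hnorm, self_mem_nhdsWithin] with w hw hw_re
  filter_upwards [ae_restrict_mem measurableSet_Ioi] with t ht
  exact norm_cpow_smul_one_sub_cexp_le hw_re hw.le ht

lemma hasDerivAt_cpow_smul_one_sub_cexp {t : ℝ} (ht : 0 < t) (s z : ℂ) :
    HasDerivAt (fun w : ℂ => (t : ℂ) ^ (s - 1) • (1 - Complex.exp (-(w * t))))
      ((t : ℂ) ^ (s + 1 - 1) • Complex.exp (-(z * t))) z := by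
  have hpow : (t : ℂ) ^ (s + 1 - 1) = (t : ℂ) ^ (s - 1) * t := by
    nth_rw 3 [← Complex.cpow_one (t : ℂ)]
    rw [← Complex.cpow_add _ _ (Complex.ofReal_ne_zero.mpr ht.ne'), add_sub_right_comm]
  have hexp : HasDerivAt (fun w : ℂ => Complex.exp (-(w * t)))
      (Complex.exp (-(z * t)) * -(1 * t)) z := ((hasDerivAt_id z).mul_const (t : ℂ)).neg.cexp
  refine ((hexp.const_sub 1).const_smul ((t : ℂ) ^ (s - 1))).congr_deriv ?_
  rw [hpow, smul_eq_mul, smul_eq_mul]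
  ring

lemma hasDerivAt_stableExponent (hs : -1 < s.re) (hs' : s.re < 0) (hz : 0 < z.re) :
    HasDerivAt (stableExponent s) (mellin (fun t : ℝ => Complex.exp (-(z * t))) (s + 1)) z := by
  have hnhds : {w : ℂ | z.re / 2 < w.re} ∈ 𝓝 z :=
    (isOpen_lt continuous_const Complex.continuous_re).mem_nhds (half_lt_self hz)
  have hbound : IntegrableOn (fun t : ℝ => t ^ s.re * Real.exp (-(z.re / 2) * t)) (Ioi 0) := by
    simpa only [rpow_one] using
      integrableOn_rpow_mul_exp_neg_mul_rpow hs one_pos (half_pos hz)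
  have hmeas : Measurable fun t : ℝ => (t : ℂ) ^ (s + 1 - 1) • Complex.exp (-(z * t)) := by
    fun_prop
  refine (hasDerivAt_integral_of_dominated_loc_of_deriv_le
    (F' := fun w t => (t : ℂ) ^ (s + 1 - 1) • Complex.exp (-(w * t))) hnhds
    (.of_forall fun w => aestronglyMeasurable_cpow_smul_one_sub_cexp s w)
    (mellinConvergent_one_sub_cexp hs hs' hz.le) hmeas.aestronglyMeasurable ?_ hbound ?_).2
  · filter_upwards [ae_restrict_mem measurableSet_Ioi] with t ht w hw
    rw [norm_smul, Complex.norm_cpow_eq_rpow_re_of_pos ht, Complex.norm_exp, add_sub_cancel_right,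
      Complex.neg_re, Complex.re_mul_ofReal, ← neg_mul]
    have ht_pos : 0 < t := ht
    gcongr
  · filter_upwards [ae_restrict_mem measurableSet_Ioi] with t ht w _
    exact hasDerivAt_cpow_smul_one_sub_cexp ht s w

lemma stableExponent_ofReal_mul {r : ℝ} (hr : 0 < r) (s z : ℂ) :
    stableExponent s (r * z) = (r : ℂ) ^ (-s) * stableExponent s z := by
  have hscale := mellin_comp_mul_left (fun t : ℝ => 1 - Complex.exp (-(z * t))) s hr
  simpa only [stableExponent, Complex.ofReal_mul, smul_eq_mul, mul_assoc, mul_left_comm z]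
    using hscale

lemma mul_mellin_cexp_eq_neg_mul_stableExponent (hs : -1 < s.re) (hs' : s.re < 0)
    (hz : 0 < z.re) :
    z * mellin (fun t : ℝ => Complex.exp (-(z * t))) (s + 1) = -s * stableExponent s z := by
  have hs0 : -s ≠ 0 := neg_ne_zero.mpr (ne_of_apply_ne Complex.re hs'.ne)
  have hderiv : HasDerivAt (fun r : ℝ => stableExponent s (r * z))
      (mellin (fun t : ℝ => Complex.exp (-(z * t))) (s + 1) * z) 1 := by
    have hray : HasDerivAt (fun r : ℝ => (r : ℂ) * z) z 1 := by
      simpa using (hasDerivAt_id (1 : ℝ)).ofReal_comp.mul_const z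
    exact (hasDerivAt_stableExponent hs hs' hz).comp_of_eq (1 : ℝ) hray (by simp)
  have hderiv' : HasDerivAt (fun r : ℝ => (r : ℂ) ^ (-s) * stableExponent s z)
      (-s * stableExponent s z) 1 := by
    simpa using (hasDerivAt_ofReal_cpow_const one_ne_zero hs0).mul_const (stableExponent s z)
  have hhom : (fun r : ℝ => stableExponent s (r * z)) =ᶠ[𝓝 1]
      fun r : ℝ => (r : ℂ) ^ (-s) * stableExponent s z := by
    filter_upwards [lt_mem_nhds one_pos] with r hr
    exact stableExponent_ofReal_mul hr s z
  rw [mul_comm]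
  exact hderiv.unique (hderiv'.congr_of_eventuallyEq hhom)

lemma stableExponent_one (hs : -1 < s.re) (hs' : s.re < 0) :
    stableExponent s 1 = -Complex.Gamma s := by
  have hs0 : s ≠ 0 := ne_of_apply_ne Complex.re hs'.ne
  have hGamma : mellin (fun t : ℝ => Complex.exp (-(1 * t))) (s + 1) = s * Complex.Gamma s := by
    rw [← Complex.Gamma_add_one s hs0, Complex.Gamma_eq_integral (by simpa using by linarith),
      Complex.GammaIntegral_eq_mellin]
    simp
  have hEuler := mul_mellin_cexp_eq_neg_mul_stableExponent hs hs' (z := 1) (by simp)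
  rw [hGamma] at hEuler
  refine mul_left_cancel₀ hs0 ?_
  linear_combination hEuler

lemma stableExponent_of_re_pos (hs : -1 < s.re) (hs' : s.re < 0) (hz : 0 < z.re) :
    stableExponent s z = -Complex.Gamma s * z ^ (-s) := by
  have hderiv (w : ℂ) (hw : w ∈ {w : ℂ | 0 < w.re}) :
      HasDerivAt (fun w => stableExponent s w * w ^ s) 0 w := by
    have hw0 : w ≠ 0 := ne_of_apply_ne Complex.re (ne_of_gt hw)
    have hpow : HasDerivAt (fun w : ℂ => w ^ s) (s * w ^ (s - 1)) w := by
      simpa using (hasDerivAt_id w).cpow_const (Or.inl hw)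
    refine ((hasDerivAt_stableExponent hs hs' hw).mul hpow).congr_deriv ?_
    have hEuler := mul_mellin_cexp_eq_neg_mul_stableExponent hs hs' hw
    rw [Complex.cpow_sub _ _ hw0, Complex.cpow_one]
    field_simp
    linear_combination w ^ s * hEuler
  have hconst : stableExponent s z * z ^ s = stableExponent s 1 * 1 ^ s :=
    (isOpen_lt continuous_const Complex.continuous_re).is_const_of_deriv_eq_zero
      (convex_halfSpace_re_gt 0).isPreconnected
      (fun w hw => (hderiv w hw).differentiableAt.differentiableWithinAt)
      (fun w hw => (hderiv w hw).deriv) hz (by simp)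
  have hs0 : s ≠ 0 := ne_of_apply_ne Complex.re hs'.ne
  have hz0 : z ≠ 0 := ne_of_apply_ne Complex.re (ne_of_gt hz)
  have hzs : z ^ s ≠ 0 := Complex.cpow_ne_zero_iff_of_exponent_ne_zero hs0 |>.mpr hz0
  rw [Complex.one_cpow, mul_one, stableExponent_one hs hs'] at hconst
  rw [Complex.cpow_neg, ← hconst, mul_inv_cancel_right₀ hzs]

theorem stableExponent_eq (hs : -1 < s.re) (hs' : s.re < 0) (hz : 0 ≤ z.re) :
    stableExponent s z = -Complex.Gamma s * z ^ (-s) := by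
  have hcont : ContinuousOn (fun z : ℂ => -Complex.Gamma s * z ^ (-s)) {z | 0 ≤ z.re} :=
    fun w hw => ((Complex.continuousAt_cpow_const_of_re_pos (Or.inl hw)
      (by simpa using hs')).const_mul _).continuousWithinAt
  have heq : EqOn (stableExponent s) (fun z => -Complex.Gamma s * z ^ (-s)) {z | 0 < z.re} :=
    fun w hw => stableExponent_of_re_pos hs hs' hw
  exact heq.of_subset_closure (continuousOn_stableExponent hs hs') hcont
    (fun w (hw : 0 < w.re) => hw.le) (Complex.closure_setOfPred_lt_re 0).ge hz

end StableExponent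

lemma complex_Gamma_neg_one_half : Complex.Gamma (-1 / 2) = -2 * (√π : ℝ) := by
  have hrec : Real.Gamma (1 / 2) = -1 / 2 * Real.Gamma (-1 / 2) := by
    simpa only [show (-1 / 2 + 1 : ℝ) = 1 / 2 by norm_num] using
      Real.Gamma_add_one (s := -1 / 2) (by norm_num)
  have hreal : Real.Gamma (-1 / 2) = -2 * √π := by
    rw [Real.Gamma_one_half_eq] at hrec
    linear_combination 2 * hrec
  simpa [hreal] using Complex.Gamma_ofReal (-1 / 2)

lemma stableExponent_neg_one_half {z : ℂ} (hz : 0 ≤ z.re) :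
    stableExponent (-1 / 2) z = (2 * √π : ℝ) * Complex.sqrt z := by
  rw [stableExponent_eq (by norm_num) (by norm_num) hz, complex_Gamma_neg_one_half]
  norm_num [Complex.sqrt]

lemma inv_sqrt_two_pi_mul_cube {t : ℝ} (ht : 0 < t) :
    ((√(2 * π * t ^ 3) : ℝ) : ℂ)⁻¹ = ((√(2 * π) : ℝ) : ℂ)⁻¹ * (t : ℂ) ^ (-1 / 2 - 1 : ℂ) := by
  have hpow : (√(t ^ 3))⁻¹ = t ^ (-1 / 2 - 1 : ℝ) := by
    rw [Real.sqrt_eq_rpow, ← rpow_natCast, ← rpow_mul ht.le, ← rpow_neg ht.le]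
    norm_num
  rw [Real.sqrt_mul (by positivity), Complex.ofReal_mul, mul_inv, ← Complex.ofReal_inv √(t ^ 3),
    hpow, Complex.ofReal_cpow ht.le]
  norm_num

lemma sqrt_neg_I_mul_ofReal (α : ℝ) :
    Complex.sqrt (-(Complex.I * α)) = (√(|α| / 2) : ℝ) * (1 - (Real.sign α : ℝ) * Complex.I) := by
  have hnorm : ‖-(Complex.I * α)‖ = |α| := by simp
  have hre : (-(Complex.I * α)).re = 0 := by simp
  have him : (-(Complex.I * α)).im = -α := by simp
  have hsign : (if 0 ≤ -α then (1 : ℂ) else -1) * (√(|α| / 2) : ℝ) =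
      -(Real.sign α : ℝ) * (√(|α| / 2) : ℝ) := by
    rcases lt_trichotomy α 0 with hneg | rfl | hpos
    · simp [Real.sign_of_neg hneg, hneg.le]
    · simp
    · simp [Real.sign_of_pos hpos, hpos.not_ge]
  rw [Complex.sqrt_eq_real_add_ite, hnorm, hre, him, add_zero, sub_zero, hsign]
  ring

theorem levy_measure_integral_general {z : ℂ} (hz : 0 ≤ z.re) :
    IntegrableOn (fun t : ℝ => (1 - Complex.exp (-(z * t))) * ((√(2 * π * t ^ 3) : ℝ) : ℂ)⁻¹)
      (Ioi 0) ∧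
    ∫ t in Ioi (0 : ℝ), (1 - Complex.exp (-(z * t))) * ((√(2 * π * t ^ 3) : ℝ) : ℂ)⁻¹ =
      (√2 : ℝ) * Complex.sqrt z := by
  have hdensity : EqOn
      (fun t : ℝ => (1 - Complex.exp (-(z * t))) * ((√(2 * π * t ^ 3) : ℝ) : ℂ)⁻¹)
      (fun t : ℝ => ((√(2 * π) : ℝ) : ℂ)⁻¹ *
        ((t : ℂ) ^ (-1 / 2 - 1 : ℂ) • (1 - Complex.exp (-(z * t))))) (Ioi 0) := fun t ht => by
    simp only [inv_sqrt_two_pi_mul_cube ht, smul_eq_mul]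
    ring
  have hconst : (√(2 * π))⁻¹ * (2 * √π) = √2 := by
    rw [Real.sqrt_mul zero_le_two]
    field_simp
    rw [Real.sq_sqrt zero_le_two]
  constructor
  · have hmellin : MellinConvergent (fun t : ℝ => 1 - Complex.exp (-(z * t))) (-1 / 2) :=
      mellinConvergent_one_sub_cexp (by norm_num) (by norm_num) hz
    exact IntegrableOn.congr_fun (hmellin.const_mul _) hdensity.symm measurableSet_Ioi
  · have hvalue := stableExponent_neg_one_half hz
    rw [stableExponent, mellin] at hvalue
    rw [setIntegral_congr_fun measurableSet_Ioi hdensity, integral_const_mul, hvalue, ← mul_assoc,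
      ← Complex.ofReal_inv, ← Complex.ofReal_mul, hconst]

/-- Appendix C, equation (7.62): for every `α ∈ ℝ`, the function
`ℓ ↦ (1 − e^{iαℓ})(2πℓ³)^{−1/2}` is Lebesgue integrable on `(0,∞)` and
`∫₀^∞ (1 − e^{iαℓ})(2πℓ³)^{−1/2} dℓ = √|α| (1 − sign(α)·i)`. -/
theorem levy_measure_integral (α : ℝ) :
    MeasureTheory.IntegrableOn
      (fun ℓ : ℝ => (1 - Complex.exp (Complex.I * (α : ℂ) * (ℓ : ℂ))) *
        ((Real.sqrt (2 * Real.pi * ℓ ^ 3) : ℝ) : ℂ)⁻¹)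
      (Set.Ioi 0) MeasureTheory.volume ∧
    (∫ ℓ in Set.Ioi (0:ℝ),
        (1 - Complex.exp (Complex.I * (α : ℂ) * (ℓ : ℂ))) *
          ((Real.sqrt (2 * Real.pi * ℓ ^ 3) : ℝ) : ℂ)⁻¹) =
      ((Real.sqrt |α| : ℝ) : ℂ) * (1 - ((Real.sign α : ℝ) : ℂ) * Complex.I) := by
  have h := levy_measure_integral_general (z := -(Complex.I * α)) (by simp)
  rw [sqrt_neg_I_mul_ofReal, ← mul_assoc, ← Complex.ofReal_mul, ← Real.sqrt_mul zero_le_two,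
    mul_div_cancel₀ _ two_ne_zero] at h
  simpa only [neg_mul, neg_neg] using h
end

section
/- (Lemma B.1.) For all real numbers ℓ, s, t, a with 0 < s < t < ℓ and a > 0, one has ∫₀^∞ (K₊(ℓ−t, b) / K₊(ℓ−s, a)) · p₀(t−s, a, b) db = 1. -/
open MeasureTheory Set Real

/-- The first-passage kernel `K₊(t, x) = √(2/(πt³)) · x · exp(−x²/(2t))`. -/
noncomputable def Kplus (t x : ℝ) : ℝ :=
  Real.sqrt (2 / (Real.pi * t ^ 3)) * x * Real.exp (-x ^ 2 / (2 * t))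

/-- The transition density of Brownian motion absorbed at `0`:
`p₀(t, x, y) = (2πt)^{−1/2}[exp(−(x−y)²/(2t)) − exp(−(x+y)²/(2t))]`. -/
noncomputable def p0 (t x y : ℝ) : ℝ :=
  (Real.sqrt (2 * Real.pi * t))⁻¹ *
    (Real.exp (-(x - y) ^ 2 / (2 * t)) - Real.exp (-(x + y) ^ 2 / (2 * t)))

/-!
Up to the factor `2 / t`, the kernel `K₊(t, ·)` is the identity times the centred Gaussian density
of variance `t`, while `p₀(t, x, ·)` is the Gaussian density of mean `x` and variance `t` minus its
reflection. Hence `∫₀^∞ K₊(u, b) p₀(v, a, b) db` unfolds to an integral over the whole line of the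
identity against a product of two Gaussian densities. That product is a constant multiple of a
Gaussian density with mean `a u / (u + v)`, so the integral is a first moment, and it equals
`K₊(u + v, a)`.
-/

open ProbabilityTheory
open scoped NNReal

section Gaussian

variable {v v₁ v₂ : ℝ≥0}

theorem gaussianPDFReal_mul_gaussianPDFReal (m₁ m₂ x : ℝ) (hv₁ : v₁ ≠ 0) (hv₂ : v₂ ≠ 0) :
    gaussianPDFReal m₁ v₁ x * gaussianPDFReal m₂ v₂ x =
      gaussianPDFReal m₁ (v₁ + v₂) m₂ *
        gaussianPDFReal ((m₁ * v₂ + m₂ * v₁) / (v₁ + v₂)) (v₁ * v₂ / (v₁ + v₂)) x := by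
  have normalization : √(2 * π * v₁) * √(2 * π * v₂) =
      √(2 * π * (v₁ + v₂)) * √(2 * π * (v₁ * v₂ / (v₁ + v₂))) := by
    rw [← sqrt_mul (by positivity), ← sqrt_mul (by positivity)]
    congr 1
    field_simp
  have complete_square : -(x - m₁) ^ 2 / (2 * v₁) + -(x - m₂) ^ 2 / (2 * v₂) =
      -(m₂ - m₁) ^ 2 / (2 * (v₁ + v₂)) +
        -(x - (m₁ * v₂ + m₂ * v₁) / (v₁ + v₂)) ^ 2 / (2 * (v₁ * v₂ / (v₁ + v₂))) := by
    field_simp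
    ring
  simp only [gaussianPDFReal, NNReal.coe_add, NNReal.coe_mul, NNReal.coe_div]
  rw [mul_mul_mul_comm, mul_mul_mul_comm (√(2 * π * (v₁ + v₂)))⁻¹, ← mul_inv, ← mul_inv,
    ← exp_add, ← exp_add, normalization, complete_square]

theorem integrable_gaussianReal_iff_integrable_smul {E : Type*} [NormedAddCommGroup E]
    [NormedSpace ℝ E] {f : ℝ → E} (m : ℝ) (hv : v ≠ 0) :
    Integrable f (gaussianReal m v) ↔ Integrable (fun x ↦ gaussianPDFReal m v x • f x) := by
  rw [gaussianReal_of_var_ne_zero m hv,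
    integrable_withDensity_iff_integrable_smul' (measurable_gaussianPDF m v)
      (ae_of_all _ fun _ ↦ gaussianPDF_lt_top)]
  simp only [toReal_gaussianPDF]

theorem integrable_gaussianPDFReal_mul_id (m : ℝ) (hv : v ≠ 0) :
    Integrable (fun x ↦ gaussianPDFReal m v x * x) :=
  (integrable_gaussianReal_iff_integrable_smul m hv).1
    ((memLp_id_gaussianReal 1).integrable le_rfl)

theorem integral_gaussianPDFReal_mul_id (m : ℝ) (hv : v ≠ 0) :
    ∫ x, gaussianPDFReal m v x * x = m :=
  (integral_gaussianReal_eq_integral_smul hv).symm.trans integral_id_gaussianReal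

theorem integrable_gaussianPDFReal_mul_gaussianPDFReal_mul_id (m₁ m₂ : ℝ)
    (hv₁ : v₁ ≠ 0) (hv₂ : v₂ ≠ 0) :
    Integrable fun x ↦ gaussianPDFReal m₁ v₁ x * gaussianPDFReal m₂ v₂ x * x := by
  simp_rw [gaussianPDFReal_mul_gaussianPDFReal m₁ m₂ _ hv₁ hv₂, mul_assoc]
  exact (integrable_gaussianPDFReal_mul_id _ (by positivity)).const_mul _

theorem integral_gaussianPDFReal_mul_gaussianPDFReal_mul_id (m₁ m₂ : ℝ)
    (hv₁ : v₁ ≠ 0) (hv₂ : v₂ ≠ 0) :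
    ∫ x, gaussianPDFReal m₁ v₁ x * gaussianPDFReal m₂ v₂ x * x =
      gaussianPDFReal m₁ (v₁ + v₂) m₂ * ((m₁ * v₂ + m₂ * v₁) / (v₁ + v₂)) := by
  simp_rw [gaussianPDFReal_mul_gaussianPDFReal m₁ m₂ _ hv₁ hv₂, mul_assoc]
  rw [integral_const_mul, integral_gaussianPDFReal_mul_id _ (by positivity)]

end Gaussian

theorem integral_Ioi_add_comp_neg {E : Type*} [NormedAddCommGroup E] [NormedSpace ℝ E]
    {f : ℝ → E} (hf : Integrable f) : ∫ x in Ioi 0, (f x + f (-x)) = ∫ x, f x := by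
  rw [integral_add hf.integrableOn hf.comp_neg.integrableOn, integral_comp_neg_Ioi, neg_zero,
    add_comm, intervalIntegral.integral_Iic_add_Ioi hf.integrableOn hf.integrableOn]

theorem Kplus_eq_gaussianPDFReal (t : ℝ≥0) (x : ℝ) :
    Kplus t x = 2 / t * (gaussianPDFReal 0 t x * x) := by
  have normalization : √(2 / (π * t ^ 3)) = 2 / t * (√(2 * π * t))⁻¹ := by
    rw [← div_eq_mul_inv, ← sqrt_sq (by positivity : (0 : ℝ) ≤ 2 / t), ← sqrt_div (sq_nonneg _)]
    congr 1
    field_simp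
  rw [Kplus, gaussianPDFReal, normalization, sub_zero]
  ring

theorem Kplus_ne_zero {t x : ℝ} (ht : 0 < t) (hx : x ≠ 0) : Kplus t x ≠ 0 := by
  unfold Kplus
  positivity

/-- Method of images for the absorbing point `0`. -/
theorem p0_eq_gaussianPDFReal_sub (t : ℝ≥0) (x y : ℝ) :
    p0 t x y = gaussianPDFReal x t y - gaussianPDFReal x t (-y) := by
  rw [p0, gaussianPDFReal, gaussianPDFReal, ← mul_sub, sub_sq_comm x y,
    show x + y = -(-y - x) by ring, neg_sq]

theorem integral_Kplus_mul_p0 {u v : ℝ} (a : ℝ) (hu : 0 < u) (hv : 0 < v) :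
    ∫ b in Ioi 0, Kplus u b * p0 v a b = Kplus (u + v) a := by
  lift u to ℝ≥0 using hu.le
  lift v to ℝ≥0 using hv.le
  have hu₀ : u ≠ 0 := NNReal.coe_ne_zero.1 hu.ne'
  have hv₀ : v ≠ 0 := NNReal.coe_ne_zero.1 hv.ne'
  let f : ℝ → ℝ := fun b ↦ gaussianPDFReal 0 u b * gaussianPDFReal a v b * b
  have fold (b : ℝ) : Kplus u b * p0 v a b = 2 / u * (f b + f (-b)) := by
    have even : gaussianPDFReal 0 u (-b) = gaussianPDFReal 0 u b := by simp [gaussianPDFReal]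
    rw [Kplus_eq_gaussianPDFReal, p0_eq_gaussianPDFReal_sub]
    simp only [f, even]
    ring
  calc ∫ b in Ioi 0, Kplus u b * p0 v a b
    _ = 2 / u * ∫ b, f b := by
      simp_rw [fold]
      rw [integral_const_mul, integral_Ioi_add_comp_neg
        (integrable_gaussianPDFReal_mul_gaussianPDFReal_mul_id 0 a hu₀ hv₀)]
    _ = 2 / u * (gaussianPDFReal 0 (u + v) a * ((0 * v + a * u) / (u + v))) := by
      rw [integral_gaussianPDFReal_mul_gaussianPDFReal_mul_id 0 a hu₀ hv₀]
    _ = Kplus (u + v) a := by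
      rw [← NNReal.coe_add, Kplus_eq_gaussianPDFReal, NNReal.coe_add]
      field_simp
      ring

theorem excursion_transition_density_integrates_to_one_general
    (ℓ s t a : ℝ) (hst : s < t) (htℓ : t < ℓ) (ha : a ≠ 0) :
    ∫ b in Ioi 0, Kplus (ℓ - t) b / Kplus (ℓ - s) a * p0 (t - s) a b = 1 := by
  simp_rw [div_mul_eq_mul_div]
  rw [integral_div, integral_Kplus_mul_p0 a (sub_pos.2 htℓ) (sub_pos.2 hst), sub_add_sub_cancel,
    div_self (Kplus_ne_zero (sub_pos.2 (hst.trans htℓ)) ha)]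

/-- Lemma B.1: for `0 < s < t < ℓ` and `a > 0`,
`∫₀^∞ (K₊(ℓ−t, b)/K₊(ℓ−s, a)) · p₀(t−s, a, b) db = 1`. -/
theorem excursion_transition_density_integrates_to_one
    (ℓ s t a : ℝ) (hs : 0 < s) (hst : s < t) (htℓ : t < ℓ) (ha : 0 < a) :
    (∫ b in Set.Ioi (0:ℝ), Kplus (ℓ - t) b / Kplus (ℓ - s) a * p0 (t - s) a b) = 1 :=
  excursion_transition_density_integrates_to_one_general ℓ s t a hst htℓ ha.ne'
end

section
/- (Summability of the weighted modified Bessel series, used in the proof of Lemma 7.6.) For every ν > 0 and every C > 0, the series ∑_{n=1}^∞ n² I_{nν}(C) converges, where for μ > 0 and z > 0, I_μ(z) := (z/2)^μ ∑_{k=0}^∞ (z²/4)^k / (k! Γ(μ + k + 1)) is the modified Bessel function of the first kind of order μ, and Γ is Euler's Gamma function. -/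
open Real

/-- The modified Bessel function of the first kind of order `μ`:
`I_μ(z) = (z/2)^μ ∑_{k=0}^∞ (z²/4)^k / (k! Γ(μ + k + 1))`. -/
noncomputable def besselI (μ z : ℝ) : ℝ :=
  (z / 2) ^ μ * ∑' k : ℕ, (z ^ 2 / 4) ^ k / ((Nat.factorial k : ℝ) * Real.Gamma (μ + k + 1))

/-!
For `μ, z ≥ 0`, the Gamma factors in the series of `I_μ(z)` are all at least `Γ(μ + 1)`, so that
`I_μ(z) ≤ (z/2)^μ e^{z²/4} / Γ(μ + 1)`. Since `Γ(μ + 1) ≥ a^μ e^{-a}` for every `a ≥ 0`, the choice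
`a = z / (2q)` turns this into `I_μ(z) ≤ q^μ e^{z/(2q) + z²/4}` with `q > 0` arbitrary. Along
`μ = nν` the Bessel functions therefore decay faster than every geometric sequence.
-/

open Filter Set Asymptotics MeasureTheory

open scoped Nat

theorem rpow_mul_exp_neg_le_Gamma_add_one {a s : ℝ} (ha : 0 ≤ a) (hs : 0 ≤ s) :
    a ^ s * exp (-a) ≤ Gamma (s + 1) := by
  have h_int : IntegrableOn (fun x ↦ exp (-x) * x ^ s) (Ioi 0) := by
    simpa only [add_sub_cancel_right] using GammaIntegral_convergent (s := s + 1) (by linarith)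
  have h_sub : Ioi a ⊆ Ioi 0 := Ioi_subset_Ioi ha
  calc a ^ s * exp (-a)
      = ∫ x in Ioi a, exp (-x) * a ^ s := by
        rw [integral_mul_const, integral_exp_neg_Ioi, mul_comm]
    _ ≤ ∫ x in Ioi a, exp (-x) * x ^ s := by
        refine setIntegral_mono_on ((integrableOn_exp_neg_Ioi a).mul_const _)
          (h_int.mono_set h_sub) measurableSet_Ioi fun x hx ↦ ?_
        have : a ≤ x := le_of_lt hx
        gcongr
    _ ≤ ∫ x in Ioi 0, exp (-x) * x ^ s := by
        refine setIntegral_mono_set h_int ?_ h_sub.eventuallyLE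
        filter_upwards [ae_restrict_mem measurableSet_Ioi] with x hx
        exact mul_nonneg (exp_pos _).le (rpow_nonneg (le_of_lt hx) s)
    _ = Gamma (s + 1) := by
        rw [Gamma_eq_integral (by linarith), add_sub_cancel_right]

theorem Gamma_le_Gamma_add_natCast {s : ℝ} (hs : 1 ≤ s) (k : ℕ) : Gamma s ≤ Gamma (s + k) := by
  induction k with
  | zero => simp
  | succ k ih =>
    have hk : 1 ≤ s + k := by linarith [k.cast_nonneg (α := ℝ)]
    calc Gamma s ≤ Gamma (s + k) := ih
      _ ≤ (s + k) * Gamma (s + k) :=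
        le_mul_of_one_le_left (Gamma_nonneg_of_nonneg (by linarith)) hk
      _ = Gamma (s + (k + 1 : ℕ)) := by
        rw [← Gamma_add_one (by linarith), Nat.cast_succ, add_assoc]

section BesselI

variable {μ ν z : ℝ}

theorem besselI_term_nonneg (hμ : -1 < μ) (z : ℝ) (k : ℕ) :
    0 ≤ (z ^ 2 / 4) ^ k / (k ! * Gamma (μ + k + 1)) := by
  have : 0 ≤ Gamma (μ + k + 1) :=
    Gamma_nonneg_of_nonneg (by linarith [k.cast_nonneg (α := ℝ)])
  positivity

theorem besselI_nonneg (hμ : -1 < μ) (hz : 0 ≤ z) : 0 ≤ besselI μ z :=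
  mul_nonneg (by positivity) (tsum_nonneg (besselI_term_nonneg hμ z))

theorem besselI_le_div_Gamma_mul_exp (hμ : 0 ≤ μ) (hz : 0 ≤ z) :
    besselI μ z ≤ (z / 2) ^ μ / Gamma (μ + 1) * exp (z ^ 2 / 4) := by
  have h_majorant : HasSum (fun k : ℕ ↦ (z ^ 2 / 4) ^ k / k ! / Gamma (μ + 1))
      (exp (z ^ 2 / 4) / Gamma (μ + 1)) := by
    rw [exp_eq_exp_ℝ]
    exact (NormedSpace.expSeries_div_hasSum_exp (z ^ 2 / 4)).div_const _
  have h_term_le (k : ℕ) : (z ^ 2 / 4) ^ k / (k ! * Gamma (μ + k + 1)) ≤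
      (z ^ 2 / 4) ^ k / k ! / Gamma (μ + 1) := by
    have h_Gamma_le : Gamma (μ + 1) ≤ Gamma (μ + k + 1) := by
      simpa only [add_right_comm] using Gamma_le_Gamma_add_natCast (s := μ + 1) (by linarith) k
    rw [← div_div]
    gcongr
  have h_summable : Summable fun k : ℕ ↦ (z ^ 2 / 4) ^ k / (k ! * Gamma (μ + k + 1)) :=
    .of_nonneg_of_le (besselI_term_nonneg (by linarith) z) h_term_le h_majorant.summable
  calc besselI μ z
      ≤ (z / 2) ^ μ * (exp (z ^ 2 / 4) / Gamma (μ + 1)) :=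
        mul_le_mul_of_nonneg_left (hasSum_le h_term_le h_summable.hasSum h_majorant)
          (by positivity)
    _ = (z / 2) ^ μ / Gamma (μ + 1) * exp (z ^ 2 / 4) := by ring

theorem besselI_le_rpow_mul_exp (hμ : 0 ≤ μ) (hz : 0 ≤ z) {q : ℝ} (hq : 0 < q) :
    besselI μ z ≤ q ^ μ * exp (z / (2 * q) + z ^ 2 / 4) := by
  have h_Gamma_pos : 0 < Gamma (μ + 1) := Gamma_pos_of_pos (by linarith)
  have h_rpow_le : (z / 2) ^ μ ≤ q ^ μ * exp (z / (2 * q)) * Gamma (μ + 1) :=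
    calc (z / 2) ^ μ
        = (q * (z / (2 * q))) ^ μ := by congr 1; field_simp
      _ = q ^ μ * exp (z / (2 * q)) * ((z / (2 * q)) ^ μ * exp (-(z / (2 * q)))) := by
        rw [mul_rpow hq.le (by positivity), exp_neg]
        field_simp
      _ ≤ q ^ μ * exp (z / (2 * q)) * Gamma (μ + 1) := by
        gcongr
        exact rpow_mul_exp_neg_le_Gamma_add_one (by positivity) hμ
  calc besselI μ z
      ≤ (z / 2) ^ μ / Gamma (μ + 1) * exp (z ^ 2 / 4) := besselI_le_div_Gamma_mul_exp hμ hz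
    _ ≤ q ^ μ * exp (z / (2 * q)) * exp (z ^ 2 / 4) := by
      gcongr
      exact (div_le_iff₀ h_Gamma_pos).2 h_rpow_le
    _ = q ^ μ * exp (z / (2 * q) + z ^ 2 / 4) := by rw [exp_add, mul_assoc]

theorem besselI_natCast_mul_isBigO_pow (hν : 0 < ν) (hz : 0 ≤ z) {r : ℝ} (hr : 0 < r) :
    (fun n : ℕ ↦ besselI (n * ν) z) =O[atTop] fun n ↦ r ^ n := by
  set q := r ^ ν⁻¹
  have hq (n : ℕ) : q ^ (n * ν) = r ^ n := by
    rw [mul_comm, rpow_mul (by positivity), rpow_inv_rpow hr.le hν.ne', rpow_natCast]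
  refine .of_bound (exp (z / (2 * q) + z ^ 2 / 4)) (.of_forall fun n ↦ ?_)
  have hn : 0 ≤ n * ν := by positivity
  rw [norm_of_nonneg (besselI_nonneg (by linarith) hz), norm_of_nonneg (by positivity),
    ← hq]
  exact (besselI_le_rpow_mul_exp hn hz (by positivity)).trans_eq (mul_comm _ _)

theorem summable_weighted_besselI_general {w : ℕ → ℝ} {R : ℝ}
    (hw : w =O[atTop] fun n ↦ R ^ n) (hν : 0 < ν) (hz : 0 ≤ z) :
    Summable fun n : ℕ ↦ w n * besselI (n * ν) z := by
  have h_ratio : ‖R * (|R| + 1)⁻¹‖ < 1 := by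
    rw [← div_eq_mul_inv, norm_div, norm_eq_abs, norm_of_nonneg (by positivity),
      div_lt_one (by positivity)]
    exact lt_add_one _
  refine summable_of_isBigO_nat (summable_geometric_of_norm_lt_one h_ratio) ?_
  simp only [mul_pow]
  exact hw.mul (besselI_natCast_mul_isBigO_pow hν hz (by positivity))

end BesselI

/-- Summability of the weighted modified Bessel series (used in the proof of Lemma 7.6):
for every `ν > 0` and `C > 0`, the series `∑_{n≥1} n² I_{nν}(C)` converges. -/
theorem summable_weighted_besselI (ν C : ℝ) (hν : 0 < ν) (hC : 0 < C) :
    Summable (fun n : ℕ => (n : ℝ) ^ 2 * besselI ((n : ℝ) * ν) C) :=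
  summable_weighted_besselI_general
    (isLittleO_pow_const_const_pow_of_one_lt 2 one_lt_two).isBigO hν hC.le
end
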